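/- arXiv:1309.1771 — 2 statements merged into one kernel-verified Lean document; each statement's English description precedes it below -/
import Mathlib

section
/- Let C_{α,β} be a connected 1-dimensional simplicial even walk and let G be the simple graph whose edges are the facets occurring in C_{α,β}. Then either G is a cycle of even length, or G contains at least two distinct cycles. -/
open Finset

/-- Successor modulo `m` on `Fin m`. -/
def cyclicNext {m : ℕ} (i : Fin m) : Fin m := ⟨(i.val + 1) % m, Nat.mod_lt _ i.pos⟩

/-- The `α`-degree of a vertex `x`. -/
def walkDeg {V : Type*} [DecidableEq V] {q s : ℕ} (F : Fin q → Finset V)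
    (α : Fin s → Fin q) (x : V) : ℕ :=
  (Finset.univ.filter fun t : Fin s => x ∈ F (α t)).card

/-- Simplicial even walk `C_{α,β}`. -/
def IsEvenWalk {V : Type*} [DecidableEq V] {q s : ℕ} (F : Fin q → Finset V)
    (α β : Fin s → Fin q) : Prop :=
  2 ≤ s ∧ Disjoint (Set.range α) (Set.range β) ∧
    ∀ i ∈ Set.range α, ∀ j ∈ Set.range β,
      ¬ (↑(F i \ F j) ⊆ {x : V | walkDeg F β x < walkDeg F α x}) ∧
      ¬ (↑(F j \ F i) ⊆ {x : V | walkDeg F α x < walkDeg F β x})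

/-- The vertex set of the even walk `C_{α,β}`. -/
def walkVerts {V : Type*} [DecidableEq V] {q s : ℕ} (F : Fin q → Finset V)
    (α β : Fin s → Fin q) : Finset V :=
  Finset.univ.biUnion fun t : Fin s => F (α t) ∪ F (β t)

/-- Two vertices are adjacent in (the graph formed by the facets of) `C_{α,β}`. -/
def walkAdj {V : Type*} [DecidableEq V] {q s : ℕ} (F : Fin q → Finset V)
    (α β : Fin s → Fin q) (u v : V) : Prop :=
  u ≠ v ∧ ∃ t : Fin s,
    (u ∈ F (α t) ∧ v ∈ F (α t)) ∨ (u ∈ F (β t) ∧ v ∈ F (β t))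

/-- The set of (distinct) facets occurring in `C_{α,β}`: the edge set of the
graph `G` formed by the walk. -/
def walkEdges {V : Type*} [DecidableEq V] {q s : ℕ} (F : Fin q → Finset V)
    (α β : Fin s → Fin q) : Finset (Finset V) :=
  (Finset.univ.image fun t : Fin s => F (α t)) ∪
    (Finset.univ.image fun t : Fin s => F (β t))

namespace SimpleGraph

variable {W : Type*} {G : SimpleGraph W}

/-- A connected graph in which all cycles have the same edge set has exactly as many edges as
vertices as soon as it has a cycle. -/
theorem Connected.card_edgeFinset_eq_of_unique_cycle [Fintype W] [DecidableEq W]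
    [DecidableRel G.Adj] (hG : G.Connected) {v : W} {c : G.Walk v v} (hc : c.IsCycle)
    (huniq : ∀ (w : W) (d : G.Walk w w), d.IsCycle → ∀ f, f ∈ c.edges ↔ f ∈ d.edges) :
    G.edgeFinset.card = Fintype.card W := by
  obtain ⟨f, hf⟩ := c.edges.exists_mem_of_ne_nil (by simp [hc.not_nil])
  have hfG : f ∈ G.edgeSet := c.edges_subset_edgeSet hf
  have hconn : (G.deleteEdges {f}).Connected := by
    induction f with
    | h x y =>
      exact hG.connected_delete_edge_of_not_isBridge fun hb => hb.notMem_edges_of_isCycle hc hf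
  have hacyc : (G.deleteEdges {f}).IsAcyclic := by
    intro w d hd
    have hmem := (huniq w (d.mapLe (G.deleteEdges_le {f})) (hd.mapLe _) f).1 hf
    rw [Walk.edges_mapLe_eq_edges] at hmem
    simpa using d.edges_subset_edgeSet hmem
  have hcount := (IsTree.mk hconn hacyc).card_edgeFinset
  have hcard : (G.deleteEdges {f}).edgeFinset.card = G.edgeFinset.card - 1 := by
    rw [← Finset.card_erase_of_mem (mem_edgeFinset.2 hfG)]
    congr 1
    ext g
    simp [and_comm]
  have hpos : 0 < G.edgeFinset.card := Finset.card_pos.2 ⟨f, mem_edgeFinset.2 hfG⟩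
  omega

/-- In a connected graph all of whose vertices have degree two, every cycle uses all edges. -/
theorem Connected.mem_edges_of_isCycle [Fintype W] [DecidableRel G.Adj] (hG : G.Connected)
    (hdeg : ∀ w, G.degree w = 2) {v : W} {c : G.Walk v v} (hc : c.IsCycle) {f : Sym2 W}
    (hf : f ∈ G.edgeSet) : f ∈ c.edges := by
  have hcycles : G.IsCycles := by
    intro w _
    rw [Set.ncard_eq_toFinset_card', Set.toFinset_card, card_neighborSet_eq_degree, hdeg]
  have hadj {x y : W} (hx : x ∈ c.support) (hxy : G.Adj x y) : s(x, y) ∈ c.edges :=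
    Walk.adj_toSubgraph_iff_mem_edges.1
      ((hc.adj_toSubgraph_iff_of_isCycles hcycles (c.mem_verts_toSubgraph.2 hx) y).2 hxy)
  have hall (x : W) : x ∈ c.support := by
    have hreach := (reachable_iff_reflTransGen v x).1 (hG.preconnected v x)
    induction hreach with
    | refl => exact c.start_mem_support
    | tail _ hstep ih => exact c.snd_mem_support_of_mem_edges (hadj ih hstep)
  induction f with
  | h x y => exact hadj (hall x) hf

/-- If every vertex of a connected graph `A ⊔ B` meets both of the disjoint graphs `A` and `B`,
then `A ⊔ B` is a cycle of even length or has two cycles with different edge sets. -/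
theorem exists_even_cycle_or_two_cycles [Finite W] {A B : SimpleGraph W} (hdisj : Disjoint A B)
    (hA : ∀ v, ∃ w, A.Adj v w) (hB : ∀ v, ∃ w, B.Adj v w) (hconn : (A ⊔ B).Connected) :
    (∃ (v : W) (c : (A ⊔ B).Walk v v), c.IsCycle ∧ Even c.length ∧
      ∀ f ∈ (A ⊔ B).edgeSet, f ∈ c.edges) ∨
    ∃ (v : W) (c : (A ⊔ B).Walk v v) (w : W) (d : (A ⊔ B).Walk w w), c.IsCycle ∧ d.IsCycle ∧
      ¬ ∀ f, f ∈ c.edges ↔ f ∈ d.edges := by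
  classical
  have := Fintype.ofFinite W
  have hdeg (v : W) : (A ⊔ B).degree v = A.degree v + B.degree v := by
    simp_rw [← card_neighborFinset_eq_degree]
    rw [neighborFinset_sup, Finset.card_union_of_disjoint]
    rw [Finset.disjoint_left]
    intro w hAw hBw
    rw [mem_neighborFinset] at hAw hBw
    exact (disjoint_left.1 hdisj) v w hAw hBw
  have hApos (v : W) : 0 < A.degree v := (A.degree_pos_iff_exists_adj v).2 (hA v)
  have hBpos (v : W) : 0 < B.degree v := (B.degree_pos_iff_exists_adj v).2 (hB v)
  have hcyc : ¬ (A ⊔ B).IsAcyclic := by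
    intro hacyc
    obtain ⟨v⟩ := hconn.nonempty
    obtain ⟨w, hw⟩ := hA v
    have : Nontrivial W := ⟨v, w, hw.ne⟩
    obtain ⟨u, hu⟩ := (IsTree.mk hconn hacyc).exists_vert_degree_one_of_nontrivial
    have := hdeg u
    have := hApos u
    have := hBpos u
    omega
  simp only [IsAcyclic, not_forall, not_not] at hcyc
  obtain ⟨v, c, hc⟩ := hcyc
  by_cases huniq : ∀ (w : W) (d : (A ⊔ B).Walk w w), d.IsCycle → ∀ f, f ∈ c.edges ↔ f ∈ d.edges
  · left
    have hcard := hconn.card_edgeFinset_eq_of_unique_cycle hc huniq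
    have hsum : ∑ v, (A.degree v + B.degree v) = ∑ _v : W, (1 + 1) := by
      simp_rw [← hdeg, sum_degrees_eq_twice_card_edges, hcard]
      simp [mul_comm]
    have hone : ∀ v, A.degree v + B.degree v = 1 + 1 := by
      have := (Finset.sum_eq_sum_iff_of_le
        (fun v _ => Nat.add_le_add (hApos v) (hBpos v))).1 hsum.symm
      exact fun v => (this v (Finset.mem_univ v)).symm
    have hAone (v : W) : A.degree v = 1 := by
      have := hone v
      have := hApos v
      have := hBpos v
      omega
    have hall := fun f (hf : f ∈ (A ⊔ B).edgeSet) =>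
      hconn.mem_edges_of_isCycle (fun v => (hdeg v).trans (hone v)) hc hf
    refine ⟨v, c, hc, ?_, hall⟩
    have hedges : c.edges.toFinset = (A ⊔ B).edgeFinset := by
      ext f
      simp only [List.mem_toFinset, mem_edgeFinset]
      exact ⟨fun hf => c.edges_subset_edgeSet hf, hall f⟩
    have hlen : c.length = Fintype.card W := by
      rw [← c.length_edges, ← List.toFinset_card_of_nodup hc.edges_nodup, hedges, ← hcard]
      congr!
    have hsumA := A.sum_degrees_eq_twice_card_edges
    simp only [hAone, Finset.sum_const, Finset.card_univ, smul_eq_mul, mul_one] at hsumA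
    rw [hlen, hsumA]
    exact even_two_mul _
  · right
    simp only [not_forall] at huniq
    obtain ⟨w, d, hd, hne⟩ := huniq
    exact ⟨v, c, w, d, hc, hd, by simpa using hne⟩

/-- The vertices of a closed walk, listed cyclically and viewed in a larger type. -/
def Walk.cyclicVerts {V : Type*} (g : W → V) {v : W} (c : G.Walk v v) (t : Fin c.length) : V :=
  g (c.getVert t)

theorem Walk.IsCycle.cyclicVerts_injective {V : Type*} {g : W → V} (hg : Function.Injective g)
    {v : W} {c : G.Walk v v} (hc : c.IsCycle) : Function.Injective (c.cyclicVerts g) := by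
  intro i j hij
  refine Fin.ext (hc.getVert_injOn' ?_ ?_ (hg hij))
  · exact Nat.le_sub_one_of_lt i.isLt
  · exact Nat.le_sub_one_of_lt j.isLt

theorem Walk.getVert_cyclicNext {v : W} (c : G.Walk v v) (t : Fin c.length) :
    c.getVert (cyclicNext t) = c.getVert (t + 1) := by
  rcases Nat.lt_or_ge (t + 1) c.length with hlt | hge
  · simp [cyclicNext, Nat.mod_eq_of_lt hlt]
  · have heq : (t : ℕ) + 1 = c.length := le_antisymm t.isLt hge
    simp [cyclicNext, heq]

theorem Walk.mem_image_cyclicVerts {V : Type*} [DecidableEq V] (g : W → V) {v : W}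
    (c : G.Walk v v) {p : Finset V} :
    p ∈ (Finset.univ.image fun t : Fin c.length =>
      ({c.cyclicVerts g t, c.cyclicVerts g (cyclicNext t)} : Finset V)) ↔
    ∃ a b, s(a, b) ∈ c.edges ∧ p = {g a, g b} := by
  simp only [Finset.mem_image, Finset.mem_univ, true_and, cyclicVerts, getVert_cyclicNext]
  constructor
  · rintro ⟨t, rfl⟩
    exact ⟨_, _, (c.mk_mem_edges_iff_exists).2 ⟨t, t.isLt, rfl⟩, rfl⟩
  · rintro ⟨a, b, hab, rfl⟩
    obtain ⟨i, hi, heq⟩ := (c.mk_mem_edges_iff_exists).1 hab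
    refine ⟨⟨i, hi⟩, ?_⟩
    rcases Sym2.eq_iff.1 heq with ⟨ha, hb⟩ | ⟨ha, hb⟩
    · simp [ha, hb]
    · simp [ha, hb, Finset.pair_comm]

theorem Walk.pair_mem_image_cyclicVerts {V : Type*} [DecidableEq V] {g : W → V}
    (hg : Function.Injective g) {v : W} (c : G.Walk v v) {a b : W} :
    ({g a, g b} : Finset V) ∈ (Finset.univ.image fun t : Fin c.length =>
      ({c.cyclicVerts g t, c.cyclicVerts g (cyclicNext t)} : Finset V)) ↔ s(a, b) ∈ c.edges := by
  rw [mem_image_cyclicVerts]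
  constructor
  · rintro ⟨x, y, hmem, heq⟩
    have hpair : s(g a, g b) = s(g x, g y) := by
      rw [← Finset.coe_inj] at heq
      simpa [Set.pair_eq_pair_iff] using heq
    rw [← Sym2.map_mk, ← Sym2.map_mk] at hpair
    rwa [Sym2.map.injective hg hpair]
  · exact fun hab => ⟨a, b, hab, rfl⟩

end SimpleGraph

section TupleGraph

variable {V : Type*} {q s : ℕ}

/-- The graph formed by the edges `e (γ t)` on a set of vertices. -/
def tupleGraph (e : Fin q → Finset V) (γ : Fin s → Fin q) (S : Finset V) : SimpleGraph S where
  Adj u v := u ≠ v ∧ ∃ t, u.1 ∈ e (γ t) ∧ v.1 ∈ e (γ t)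
  symm := ⟨fun _ _ h => ⟨h.1.symm, h.2.imp fun _ ht => ht.symm⟩⟩
  loopless := ⟨fun _ h => h.1 rfl⟩

theorem exists_tupleGraph_adj {e : Fin q → Finset V} (hcard : ∀ i, (e i).card = 2)
    {γ : Fin s → Fin q} {S : Finset V}
    (hS : ∀ t, e (γ t) ⊆ S) {x : S} {t : Fin s} (hx : x.1 ∈ e (γ t)) :
    ∃ y, (tupleGraph e γ S).Adj x y := by
  obtain ⟨y, hy, hyx⟩ := Finset.exists_mem_ne (s := e (γ t)) (by rw [hcard]; norm_num) x.1
  exact ⟨⟨y, hS t hy⟩, fun heq => hyx (congrArg Subtype.val heq).symm, t, hx, hy⟩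

end TupleGraph

section EvenWalk

variable {V : Type*} [DecidableEq V] {q s : ℕ} {e : Fin q → Finset V} {α β : Fin s → Fin q}

theorem IsEvenWalk.symm (h : IsEvenWalk e α β) : IsEvenWalk e β α :=
  ⟨h.1, h.2.1.symm, fun j hj i hi => (h.2.2 i hi j hj).symm⟩

theorem walkDeg_pos_iff {x : V} : 0 < walkDeg e α x ↔ ∃ t, x ∈ e (α t) := by
  simp [walkDeg, Finset.card_pos, Finset.Nonempty]

/-- Every vertex of an `α`-edge of an even walk also lies on a `β`-edge. -/
theorem IsEvenWalk.exists_mem_right (hcard : ∀ i, (e i).card = 2) (h : IsEvenWalk e α β)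
    {x : V} {t : Fin s} (hx : x ∈ e (α t)) : ∃ t', x ∈ e (β t') := by
  by_contra hno
  have hxα : 0 < walkDeg e α x := walkDeg_pos_iff.2 ⟨t, hx⟩
  have hxβ : walkDeg e β x = 0 := by
    have := mt walkDeg_pos_iff.1 hno
    omega
  obtain ⟨y, hy⟩ : ∃ y, (e (α t)).erase x = {y} := by
    rw [← Finset.card_eq_one, Finset.card_erase_of_mem hx, hcard]
  have hyt : y ∈ e (α t) := by
    have : y ∈ (e (α t)).erase x := by simp [hy]
    exact Finset.mem_of_mem_erase this
  have key (t' : Fin s) : y ∉ e (β t') ∧ walkDeg e α y ≤ walkDeg e β y := by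
    have hnot := (h.2.2 (α t) ⟨t, rfl⟩ (β t') ⟨t', rfl⟩).1
    obtain ⟨z, hz, hzdeg⟩ := Set.not_subset.1 hnot
    rw [Finset.mem_coe, Finset.mem_sdiff] at hz
    simp only [Set.mem_ofPred_eq, not_lt] at hzdeg
    have hzx : z ≠ x := by
      rintro rfl
      omega
    have hzy : z = y := by
      have : z ∈ (e (α t)).erase x := Finset.mem_erase.2 ⟨hzx, hz.1⟩
      simpa [hy] using this
    exact hzy ▸ ⟨hz.2, hzdeg⟩
  have hyβ : 0 < walkDeg e β y := (walkDeg_pos_iff.2 ⟨t, hyt⟩).trans_le (key t).2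
  obtain ⟨t', ht⟩ := walkDeg_pos_iff.1 hyβ
  exact (key t').1 ht

theorem eq_pair_of_mem (hcard : ∀ i, (e i).card = 2) {i : Fin q} {u v : V} (huv : u ≠ v)
    (hu : u ∈ e i) (hv : v ∈ e i) : e i = {u, v} := by
  refine (Finset.eq_of_subset_of_card_le ?_ ?_).symm
  · exact Finset.insert_subset hu (Finset.singleton_subset_iff.2 hv)
  · rw [hcard, Finset.card_pair huv]

theorem disjoint_tupleGraph (hcard : ∀ i, (e i).card = 2) (hinj : Function.Injective e)
    (h : Disjoint (Set.range α) (Set.range β)) (S : Finset V) :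
    Disjoint (tupleGraph e α S) (tupleGraph e β S) := by
  rw [SimpleGraph.disjoint_left]
  rintro u v ⟨hne, t, hu, hv⟩ ⟨_, t', hu', hv'⟩
  have huv : u.1 ≠ v.1 := fun heq => hne (Subtype.ext heq)
  have heq : e (α t) = e (β t') :=
    (eq_pair_of_mem hcard huv hu hv).trans (eq_pair_of_mem hcard huv hu' hv').symm
  exact Set.disjoint_left.1 h ⟨t, rfl⟩ ⟨t', (hinj heq).symm⟩

theorem mem_walkVerts {x : V} :
    x ∈ walkVerts e α β ↔ ∃ t, x ∈ e (α t) ∨ x ∈ e (β t) := by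
  simp [walkVerts]

theorem mem_walkEdges_iff (hcard : ∀ i, (e i).card = 2) {p : Finset V} :
    p ∈ walkEdges e α β ↔ ∃ a b : walkVerts e α β,
      s(a, b) ∈ (tupleGraph e α (walkVerts e α β) ⊔ tupleGraph e β (walkVerts e α β)).edgeSet ∧
        p = {a.1, b.1} := by
  simp only [walkEdges, Finset.mem_union, Finset.mem_image, Finset.mem_univ, true_and,
    SimpleGraph.mem_edgeSet, SimpleGraph.sup_adj]
  constructor
  · rintro (⟨t, rfl⟩ | ⟨t, rfl⟩)
    · obtain ⟨a, b, hab, heq⟩ := Finset.card_eq_two.1 (hcard (α t))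
      have ha : a ∈ e (α t) := by simp [heq]
      have hb : b ∈ e (α t) := by simp [heq]
      exact ⟨⟨a, mem_walkVerts.2 ⟨t, .inl ha⟩⟩, ⟨b, mem_walkVerts.2 ⟨t, .inl hb⟩⟩,
        .inl ⟨fun h => hab (congrArg Subtype.val h), t, ha, hb⟩, heq⟩
    · obtain ⟨a, b, hab, heq⟩ := Finset.card_eq_two.1 (hcard (β t))
      have ha : a ∈ e (β t) := by simp [heq]
      have hb : b ∈ e (β t) := by simp [heq]
      exact ⟨⟨a, mem_walkVerts.2 ⟨t, .inr ha⟩⟩, ⟨b, mem_walkVerts.2 ⟨t, .inr hb⟩⟩,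
        .inr ⟨fun h => hab (congrArg Subtype.val h), t, ha, hb⟩, heq⟩
  · rintro ⟨a, b, ⟨hne, t, ha, hb⟩ | ⟨hne, t, ha, hb⟩, rfl⟩
    · exact .inl ⟨t, eq_pair_of_mem hcard (fun h => hne (Subtype.ext h)) ha hb⟩
    · exact .inr ⟨t, eq_pair_of_mem hcard (fun h => hne (Subtype.ext h)) ha hb⟩

theorem connected_tupleGraph_sup (hne : (walkVerts e α β).Nonempty)
    (hconn : ∀ u v : V, u ∈ walkVerts e α β → v ∈ walkVerts e α β →
      Relation.ReflTransGen (walkAdj e α β) u v) :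
    (tupleGraph e α (walkVerts e α β) ⊔ tupleGraph e β (walkVerts e α β)).Connected := by
  have : Nonempty (walkVerts e α β) := hne.to_subtype
  refine ⟨fun u v => ?_⟩
  obtain ⟨v, hv⟩ := v
  have hwalk := hconn u v u.2 hv
  induction hwalk with
  | refl => exact .refl _
  | @tail b c _ hstep ih =>
    obtain ⟨hbc, t, ⟨hb, hc⟩ | ⟨hb, hc⟩⟩ := hstep
    · have hbS : b ∈ walkVerts e α β := mem_walkVerts.2 ⟨t, .inl hb⟩
      refine (ih hbS).trans (SimpleGraph.Adj.reachable (.inl ⟨?_, t, hb, hc⟩))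
      exact fun h => hbc (congrArg Subtype.val h)
    · have hbS : b ∈ walkVerts e α β := mem_walkVerts.2 ⟨t, .inr hb⟩
      refine (ih hbS).trans (SimpleGraph.Adj.reachable (.inr ⟨?_, t, hb, hc⟩))
      exact fun h => hbc (congrArg Subtype.val h)

end EvenWalk

theorem stmt11 {V : Type*} [DecidableEq V] {q s : ℕ} (e : Fin q → Finset V)
    (hcard : ∀ i, (e i).card = 2) (hinj : Function.Injective e)
    (α β : Fin s → Fin q) (h : IsEvenWalk e α β)
    (hconn : ∀ u v : V, u ∈ walkVerts e α β → v ∈ walkVerts e α β →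
        Relation.ReflTransGen (walkAdj e α β) u v) :
    (∃ (m : ℕ) (x : Fin m → V), 3 ≤ m ∧ Even m ∧ Function.Injective x ∧
        walkEdges e α β =
          Finset.univ.image fun t : Fin m => ({x t, x (cyclicNext t)} : Finset V)) ∨
    (∃ (m₁ : ℕ) (x₁ : Fin m₁ → V) (m₂ : ℕ) (x₂ : Fin m₂ → V),
        (3 ≤ m₁ ∧ Function.Injective x₁ ∧
          (Finset.univ.image fun t : Fin m₁ => ({x₁ t, x₁ (cyclicNext t)} : Finset V)) ⊆
            walkEdges e α β) ∧
        (3 ≤ m₂ ∧ Function.Injective x₂ ∧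
          (Finset.univ.image fun t : Fin m₂ => ({x₂ t, x₂ (cyclicNext t)} : Finset V)) ⊆
            walkEdges e α β) ∧
        (Finset.univ.image fun t : Fin m₁ => ({x₁ t, x₁ (cyclicNext t)} : Finset V)) ≠
          (Finset.univ.image fun t : Fin m₂ => ({x₂ t, x₂ (cyclicNext t)} : Finset V))) := by
  have hα (x : walkVerts e α β) : ∃ t, x.1 ∈ e (α t) := by
    obtain ⟨t, hx | hx⟩ := mem_walkVerts.1 x.2
    · exact ⟨t, hx⟩
    · exact h.symm.exists_mem_right hcard hx
  have hβ (x : walkVerts e α β) : ∃ t, x.1 ∈ e (β t) := by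
    obtain ⟨t, hx⟩ := hα x
    exact h.exists_mem_right hcard hx
  have hne : (walkVerts e α β).Nonempty := by
    have t : Fin s := ⟨0, by have := h.1; omega⟩
    obtain ⟨x, hx⟩ : (e (α t)).Nonempty := Finset.card_pos.1 (by rw [hcard]; norm_num)
    exact ⟨x, mem_walkVerts.2 ⟨t, .inl hx⟩⟩
  have hg : Function.Injective (Subtype.val : walkVerts e α β → V) := Subtype.val_injective
  rcases SimpleGraph.exists_even_cycle_or_two_cycles
    (disjoint_tupleGraph hcard hinj h.2.1 (walkVerts e α β))
    (fun x => (hα x).elim fun _ hx => exists_tupleGraph_adj hcard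
      (fun t _ hy => mem_walkVerts.2 ⟨t, .inl hy⟩) hx)
    (fun x => (hβ x).elim fun _ hx => exists_tupleGraph_adj hcard
      (fun t _ hy => mem_walkVerts.2 ⟨t, .inr hy⟩) hx)
    (connected_tupleGraph_sup hne hconn) with ⟨v, c, hc, heven, hall⟩ | ⟨v, c, w, d, hc, hd, hcd⟩
  · refine .inl ⟨c.length, c.cyclicVerts Subtype.val, hc.three_le_length, heven,
      hc.cyclicVerts_injective hg, ?_⟩
    ext p
    rw [c.mem_image_cyclicVerts, mem_walkEdges_iff hcard]
    exact ⟨fun ⟨a, b, hab, hp⟩ => ⟨a, b, hall _ hab, hp⟩,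
      fun ⟨a, b, hab, hp⟩ => ⟨a, b, c.edges_subset_edgeSet hab, hp⟩⟩
  · refine .inr ⟨c.length, c.cyclicVerts Subtype.val, d.length, d.cyclicVerts Subtype.val,
      ⟨hc.three_le_length, hc.cyclicVerts_injective hg, fun p hp => ?_⟩,
      ⟨hd.three_le_length, hd.cyclicVerts_injective hg, fun p hp => ?_⟩, fun heq => hcd ?_⟩
    · obtain ⟨a, b, hab, rfl⟩ := c.mem_image_cyclicVerts _ |>.1 hp
      exact (mem_walkEdges_iff hcard).2 ⟨a, b, c.edges_subset_edgeSet hab, rfl⟩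
    · obtain ⟨a, b, hab, rfl⟩ := d.mem_image_cyclicVerts _ |>.1 hp
      exact (mem_walkEdges_iff hcard).2 ⟨a, b, d.edges_subset_edgeSet hab, rfl⟩
    · intro f
      induction f with
      | h a b =>
        rw [← c.pair_mem_image_cyclicVerts hg, heq, d.pair_mem_image_cyclicVerts hg]
end

section
/- Let G be a simple graph which is either a tree (connected and acyclic) or contains a unique cycle and that cycle has odd length. Then the edge ideal I(G) ⊆ K[x_1,…,x_n] is of linear type. -/
open Finset MvPolynomial

/-- The squarefree monomial `f_i = ∏_{x ∈ F_i} x` of a facet `F_i`. -/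
noncomputable def facetMonomial (K : Type*) [Field K] {n q : ℕ}
    (F : Fin q → Finset (Fin n)) (i : Fin q) : MvPolynomial (Fin n) K :=
  ∏ x ∈ F i, X x

/-- The `R`-algebra map `ψ : S = R[T_1,…,T_q] → R[t]`, `T_i ↦ f_i·t`. -/
noncomputable def reesHom (K : Type*) [Field K] {n q : ℕ} (F : Fin q → Finset (Fin n)) :
    MvPolynomial (Fin q) (MvPolynomial (Fin n) K) →ₐ[MvPolynomial (Fin n) K]
      Polynomial (MvPolynomial (Fin n) K) :=
  aeval fun i : Fin q => Polynomial.C (facetMonomial K F i) * Polynomial.X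

/-- The defining ideal `J = ker ψ` of the Rees algebra `R[It]`. -/
noncomputable def reesIdeal (K : Type*) [Field K] {n q : ℕ} (F : Fin q → Finset (Fin n)) :
    Ideal (MvPolynomial (Fin q) (MvPolynomial (Fin n) K)) :=
  RingHom.ker (reesHom K F)

/-- The ideal generated by the facet monomials is of linear type: its Rees ideal `J`
is generated by its elements that are homogeneous of degree `1` in `T_1,…,T_q`. -/
def IsLinearType (K : Type*) [Field K] {n q : ℕ} (F : Fin q → Finset (Fin n)) : Prop :=
  reesIdeal K F = Ideal.span {g | g ∈ reesIdeal K F ∧ g.IsHomogeneous 1}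

/-- A cycle in the graph with edges `e i`: an injective cyclic list of `m ≥ 3`
vertices whose consecutive pairs are edges of the graph. -/
def IsCycleIn {n q : ℕ} (e : Fin q → Finset (Fin n)) {m : ℕ} (x : Fin m → Fin n) : Prop :=
  3 ≤ m ∧ Function.Injective x ∧
    ∀ t : Fin m, ∃ i : Fin q, e i = {x t, x (cyclicNext t)}

/-- The exponent vector of the squarefree monomial with support `F i`. -/
noncomputable def facetExponent {n q : ℕ} (F : Fin q → Finset (Fin n)) (i : Fin q) :
    Fin n →₀ ℕ :=
  ∑ x ∈ F i, Finsupp.single x 1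

lemma facetExponent_apply {n q : ℕ} (F : Fin q → Finset (Fin n)) (i : Fin q) (v : Fin n) :
    facetExponent F i v = if v ∈ F i then 1 else 0 := by
  simp [facetExponent, Finsupp.finsetSum_apply, Finsupp.single_apply]

lemma facetMonomial_eq_monomial (K : Type*) [Field K] {n q : ℕ}
    (F : Fin q → Finset (Fin n)) (i : Fin q) :
    facetMonomial K F i = monomial (facetExponent F i) 1 := by
  rw [facetMonomial, facetExponent, monomial_sum_one]
  rfl

/-- The exponent vector of the product of facet monomials with multiplicities `b`. -/
noncomputable def exponentMap {n q : ℕ} (F : Fin q → Finset (Fin n)) :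
    (Fin q →₀ ℕ) →ₗ[ℕ] (Fin n →₀ ℕ) :=
  Finsupp.linearCombination ℕ (facetExponent F)

lemma exponentMap_single {n q : ℕ} (F : Fin q → Finset (Fin n)) (i : Fin q) :
    exponentMap F (Finsupp.single i 1) = facetExponent F i := by
  simp [exponentMap]

lemma exponentMap_apply {n q : ℕ} (F : Fin q → Finset (Fin n)) (b : Fin q →₀ ℕ) (v : Fin n) :
    exponentMap F b v = ∑ i, if v ∈ F i then b i else 0 := by
  rw [exponentMap, Finsupp.linearCombination_apply, Finsupp.sum_fintype _ _ (by simp)]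
  simp [Finsupp.finsetSum_apply, facetExponent_apply]

lemma reesHom_monomial {K : Type*} [Field K] {n q : ℕ} (F : Fin q → Finset (Fin n))
    (b : Fin q →₀ ℕ) (a : Fin n →₀ ℕ) (k : K) :
    reesHom K F (monomial b (monomial a k)) =
      Polynomial.monomial b.degree (monomial (a + exponentMap F b) k) := by
  have hprod : (b.prod fun i m => (Polynomial.C (facetMonomial K F i) * Polynomial.X) ^ m) =
      Polynomial.monomial b.degree (monomial (exponentMap F b) (1 : K)) := by
    induction b using Finsupp.induction_linear with
    | zero => simp
    | add f g hf hg =>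
      rw [Finsupp.prod_add_index' (by simp) (by intros; rw [pow_add]), hf, hg,
        Polynomial.monomial_mul_monomial, monomial_mul, map_add, map_add, one_mul]
    | single i m =>
      rw [Finsupp.prod_single_index (by simp), facetMonomial_eq_monomial,
        Polynomial.C_mul_X_eq_monomial, Polynomial.monomial_pow, monomial_pow]
      simp [exponentMap]
  rw [reesHom, aeval_monomial, hprod, Polynomial.algebraMap_eq, Polynomial.C_mul_monomial,
    monomial_mul, mul_one]

/-- The rows of the incidence matrix are linearly independent over `ℤ`. -/
def IncidenceIndependent {n q : ℕ} (e : Fin q → Finset (Fin n)) : Prop :=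
  ∀ g : Fin q → ℤ, (∀ v, ∑ i, (if v ∈ e i then g i else 0) = 0) → g = 0

lemma apply_eq_zero_of_mem_of_not_exchange {n q : ℕ} {e : Fin q → Finset (Fin n)}
    (hcard : ∀ i, (e i).card = 2) {a c : Fin n →₀ ℕ} {b d : Fin q →₀ ℕ}
    (hb : b ≠ 0) (h : a + exponentMap e b = c + exponentMap e d)
    (hno : ∀ i ∈ b.support, ∀ j ∈ d.support, ¬ facetExponent e j ≤ a + facetExponent e i)
    {j : Fin q} (hj : j ∈ d.support) {u : Fin n} (hu : u ∈ e j) : a u = 0 := by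
  by_contra hau
  obtain ⟨v, hvu, hev⟩ : ∃ v, v ≠ u ∧ e j = {u, v} := by
    obtain ⟨x, y, hxy, he⟩ := Finset.card_eq_two.1 (hcard j)
    rw [he] at hu ⊢
    rcases Finset.mem_insert.1 hu with rfl | hu
    · exact ⟨y, hxy.symm, rfl⟩
    · rw [Finset.mem_singleton] at hu
      exact ⟨x, hu ▸ hxy, by rw [hu, Finset.pair_comm]⟩
  obtain ⟨i, hi, hiv⟩ : ∃ i ∈ b.support, 1 ≤ a v + facetExponent e i v := by
    by_cases hav : a v = 0
    · have hv := DFunLike.congr_fun h v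
      simp only [Finsupp.add_apply, hav, zero_add, exponentMap_apply] at hv
      have hpos : 0 < ∑ i, if v ∈ e i then d i else 0 :=
        Finset.sum_pos' (fun _ _ => Nat.zero_le _)
          ⟨j, Finset.mem_univ _, by simpa [hev, Nat.pos_iff_ne_zero] using hj⟩
      obtain ⟨i, -, hi⟩ := Finset.exists_ne_zero_of_sum_ne_zero
        (show ∑ i, (if v ∈ e i then b i else 0) ≠ 0 by omega)
      simp only [ne_eq, ite_eq_right_iff, Classical.not_imp] at hi
      exact ⟨i, by simpa using hi.2, by simp [facetExponent_apply, hi.1]⟩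
    · obtain ⟨i, hi⟩ := Finsupp.support_nonempty_iff.2 hb
      exact ⟨i, hi, by omega⟩
  refine hno i hi j hj fun w => ?_
  rw [facetExponent_apply, hev, Finsupp.add_apply]
  split_ifs with hw
  · rcases Finset.mem_insert.1 hw with rfl | hw
    · omega
    · rw [Finset.mem_singleton] at hw
      exact hw ▸ hiv
  · exact Nat.zero_le _

lemma exists_exchange {n q : ℕ} {e : Fin q → Finset (Fin n)} (hcard : ∀ i, (e i).card = 2)
    (hind : IncidenceIndependent e) {a c : Fin n →₀ ℕ} {b d : Fin q →₀ ℕ}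
    (hb : b ≠ 0) (hd : d ≠ 0) (h : a + exponentMap e b = c + exponentMap e d) :
    ∃ i ∈ b.support, ∃ j ∈ d.support,
      facetExponent e j ≤ a + facetExponent e i ∨ facetExponent e i ≤ c + facetExponent e j := by
  by_contra! hno
  have ha : ∀ j ∈ d.support, ∀ u ∈ e j, a u = 0 := fun j hj u hu =>
    apply_eq_zero_of_mem_of_not_exchange hcard hb h (fun i hi j hj => (hno i hi j hj).1) hj hu
  have hc : ∀ i ∈ b.support, ∀ u ∈ e i, c u = 0 := fun i hi u hu =>
    apply_eq_zero_of_mem_of_not_exchange hcard hd h.symm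
      (fun j hj i hi => (hno i hi j hj).2) hi hu
  have hbd : b = d := by
    have hg := hind (fun i => (b i : ℤ) - d i) fun v => by
      have hv := DFunLike.congr_fun h v
      simp only [Finsupp.add_apply, exponentMap_apply] at hv
      have hzb : c v ≠ 0 → ∑ i, (if v ∈ e i then b i else 0) = 0 := fun hcv =>
        Finset.sum_eq_zero fun i _ => by
          rw [ite_eq_right_iff]
          exact fun hvi => by_contra fun hbi => hcv (hc i (by simpa using hbi) v hvi)
      have hzd : a v ≠ 0 → ∑ i, (if v ∈ e i then d i else 0) = 0 := fun hav =>
        Finset.sum_eq_zero fun i _ => by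
          rw [ite_eq_right_iff]
          exact fun hvi => by_contra fun hdi => hav (ha i (by simpa using hdi) v hvi)
      have heq : ∑ i, (if v ∈ e i then b i else 0) = ∑ i, (if v ∈ e i then d i else 0) := by
        omega
      have hsplit : ∀ i, (if v ∈ e i then (b i : ℤ) - d i else 0) =
          ((if v ∈ e i then b i else 0 : ℕ) : ℤ) - ((if v ∈ e i then d i else 0 : ℕ) : ℤ) := by
        intro i
        split_ifs <;> simp
      simp only [hsplit, Finset.sum_sub_distrib]
      exact_mod_cast sub_eq_zero.2 (congrArg (Nat.cast (R := ℤ)) heq)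
    ext i
    have := congrFun hg i
    simp only [Pi.zero_apply] at this
    omega
  subst hbd
  obtain ⟨i, hi⟩ := Finsupp.support_nonempty_iff.2 hb
  exact (hno i hi i hi).1 (self_le_add_left _ _)

/-- The ideal generated by the elements of the Rees ideal that are linear in the `T_i`. -/
noncomputable def linearReesIdeal (K : Type*) [Field K] {n q : ℕ} (F : Fin q → Finset (Fin n)) :
    Ideal (MvPolynomial (Fin q) (MvPolynomial (Fin n) K)) :=
  Ideal.span {g | g ∈ reesIdeal K F ∧ g.IsHomogeneous 1}

lemma exchange_mem_linearReesIdeal (K : Type*) [Field K] {n q : ℕ} (F : Fin q → Finset (Fin n))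
    {a c : Fin n →₀ ℕ} (b : Fin q →₀ ℕ) {i j : Fin q}
    (h : a + facetExponent F i = c + facetExponent F j) :
    monomial (b + Finsupp.single i 1) (monomial a (1 : K)) -
      monomial (b + Finsupp.single j 1) (monomial c (1 : K)) ∈ linearReesIdeal K F := by
  have hlin : monomial (Finsupp.single i 1) (monomial a (1 : K)) -
      monomial (Finsupp.single j 1) (monomial c (1 : K)) ∈ linearReesIdeal K F := by
    refine Ideal.subset_span ⟨?_, ?_⟩
    · rw [reesIdeal, RingHom.mem_ker, map_sub, reesHom_monomial, reesHom_monomial,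
        exponentMap_single, exponentMap_single, h, Finsupp.degree_single, Finsupp.degree_single,
        sub_self]
    · exact (isHomogeneous_monomial _ (Finsupp.degree_single _ _)).sub
        (isHomogeneous_monomial _ (Finsupp.degree_single _ _))
  simpa [mul_sub, monomial_mul] using Ideal.mul_mem_left _ (monomial b 1) hlin

lemma monomial_sub_monomial_mem_linearReesIdeal (K : Type*) [Field K] {n q : ℕ}
    {e : Fin q → Finset (Fin n)} (hcard : ∀ i, (e i).card = 2) (hind : IncidenceIndependent e)
    {a c : Fin n →₀ ℕ} {b d : Fin q →₀ ℕ} (hdeg : b.degree = d.degree)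
    (h : a + exponentMap e b = c + exponentMap e d) :
    monomial b (monomial a (1 : K)) - monomial d (monomial c (1 : K)) ∈ linearReesIdeal K e := by
  induction hk : b.degree generalizing a b c d with
  | zero =>
    obtain rfl : b = 0 := (Finsupp.degree_eq_zero_iff b).1 hk
    obtain rfl : d = 0 := (Finsupp.degree_eq_zero_iff d).1 (by rw [← hdeg, hk])
    obtain rfl : a = c := by simpa using h
    simp
  | succ k ih =>
    have hb : b ≠ 0 := by rintro rfl; simp at hk
    have hd : d ≠ 0 := by rintro rfl; simp [hk] at hdeg
    obtain ⟨i, hi, j, hj, hij⟩ := exists_exchange hcard hind hb hd h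
    obtain ⟨b', rfl⟩ : ∃ b', b = b' + Finsupp.single i 1 :=
      ⟨b - Finsupp.single i 1, (tsub_add_cancel_of_le (by
        rw [Finsupp.single_le_iff, Nat.one_le_iff_ne_zero]; simpa using hi)).symm⟩
    obtain ⟨d', rfl⟩ : ∃ d', d = d' + Finsupp.single j 1 :=
      ⟨d - Finsupp.single j 1, (tsub_add_cancel_of_le (by
        rw [Finsupp.single_le_iff, Nat.one_le_iff_ne_zero]; simpa using hj)).symm⟩
    simp only [map_add, Finsupp.degree_single, add_left_inj, exponentMap_single] at hdeg h hk
    rcases hij with hij | hij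
    · obtain ⟨a', ha'⟩ := le_iff_exists_add'.1 hij
      have hrec := ih (a := a') (c := c) hdeg
        (add_right_cancel (b := facetExponent e j) (by
          rw [add_right_comm, ← ha', add_assoc, add_assoc, ← h, add_comm (facetExponent e i)]))
        hk
      have := Ideal.add_mem _ (exchange_mem_linearReesIdeal K e b' ha')
        (Ideal.mul_mem_left _ (monomial (Finsupp.single j 1) 1) hrec)
      simpa [mul_sub, monomial_mul, add_comm (Finsupp.single j 1)] using this
    · obtain ⟨c', hc'⟩ := le_iff_exists_add'.1 hij
      have hrec := ih (a := a) (c := c') hdeg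
        (add_right_cancel (b := facetExponent e i) (by
          rw [add_right_comm c', ← hc', add_assoc, add_assoc, h, add_comm (facetExponent e j)]))
        hk
      have := Ideal.sub_mem _ (Ideal.mul_mem_left _ (monomial (Finsupp.single i 1) 1) hrec)
        (exchange_mem_linearReesIdeal K e d' hc')
      simpa [mul_sub, monomial_mul, add_comm (Finsupp.single i 1)] using this

lemma isLinearType_of_incidenceIndependent (K : Type*) [Field K] {n q : ℕ}
    {e : Fin q → Finset (Fin n)} (hcard : ∀ i, (e i).card = 2) (hind : IncidenceIndependent e) :
    IsLinearType K e := by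
  refine le_antisymm ?_ (Ideal.span_le.2 fun g hg => hg.1)
  change reesIdeal K e ≤ linearReesIdeal K e
  classical
  let π := Ideal.Quotient.mkₐ K (linearReesIdeal K e)
  -- A `K`-linear left inverse of `reesHom` modulo `linearReesIdeal`, defined on monomials.
  let lift : ℕ → (Fin n →₀ ℕ) → _ ⧸ linearReesIdeal K e := fun k m =>
    if h : ∃ p : (Fin n →₀ ℕ) × (Fin q →₀ ℕ), p.2.degree = k ∧ p.1 + exponentMap e p.2 = m then
      π (monomial h.choose.2 (monomial h.choose.1 1)) else 0
  let σ : Polynomial (MvPolynomial (Fin n) K) →ₗ[K] _ ⧸ linearReesIdeal K e :=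
    Polynomial.lsum fun k => (basisMonomials (Fin n) K).constr K (lift k)
  have hlift : ∀ (a : Fin n →₀ ℕ) (b : Fin q →₀ ℕ),
      lift b.degree (a + exponentMap e b) = π (monomial b (monomial a 1)) := by
    intro a b
    have h : ∃ p : (Fin n →₀ ℕ) × (Fin q →₀ ℕ),
        p.2.degree = b.degree ∧ p.1 + exponentMap e p.2 = a + exponentMap e b := ⟨(a, b), rfl, rfl⟩
    simp only [lift, dif_pos h]
    exact Ideal.Quotient.eq.2 (monomial_sub_monomial_mem_linearReesIdeal K hcard hind
      h.choose_spec.1 h.choose_spec.2)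
  have hσ : ∀ p, σ (reesHom K e p) = π p := by
    intro p
    induction p using MvPolynomial.induction_on' with
    | add p r hp hr => rw [map_add, map_add, map_add, hp, hr]
    | monomial b r =>
      induction r using MvPolynomial.induction_on' with
      | add p r hp hr => rw [map_add, map_add, map_add, map_add, hp, hr]
      | monomial a k =>
        have hk : ∀ m : Fin n →₀ ℕ, monomial m k = k • basisMonomials (Fin n) K m := by
          intro m
          simp [smul_monomial]
        have hbk : monomial b (k • monomial a (1 : K)) = k • monomial b (monomial a (1 : K)) :=
          (smul_monomial k).symm
        rw [reesHom_monomial]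
        simp only [σ, Polynomial.lsum_apply]
        rw [Polynomial.sum_monomial_index _ _ (by simp), hk, map_smul, Module.Basis.constr_basis,
          hlift, hk, coe_basisMonomials, hbk, map_smul]
  intro p hp
  have := hσ p
  rw [show reesHom K e p = 0 from hp, map_zero] at this
  exact Ideal.Quotient.eq_zero_iff_mem.1 this.symm

/-- The simple graph whose edges are the two-element members of `E`. -/
def edgeGraph {n : ℕ} (E : Set (Finset (Fin n))) : SimpleGraph (Fin n) where
  Adj u v := u ≠ v ∧ {u, v} ∈ E
  symm := ⟨fun u v h => ⟨h.1.symm, by rw [Finset.pair_comm]; exact h.2⟩⟩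
  loopless := ⟨fun _ h => h.1 rfl⟩

lemma isAcyclic_edgeGraph {n q : ℕ} {e : Fin q → Finset (Fin n)} {E : Set (Finset (Fin n))}
    (hE : E ⊆ Set.range e)
    (h : ∀ (m : ℕ) (x : Fin m → Fin n), IsCycleIn e x → ∃ t, {x t, x (cyclicNext t)} ∉ E) :
    (edgeGraph E).IsAcyclic := by
  intro u p hp
  have hmem : ∀ t : Fin p.length,
      ({p.getVert t, p.getVert (cyclicNext t)} : Finset (Fin n)) ∈ E := by
    intro t
    have hadj := (p.adj_getVert_succ t.2).2
    suffices p.getVert (cyclicNext t) = p.getVert (t + 1) by rwa [this]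
    rcases (Nat.succ_le_of_lt t.2).lt_or_eq with ht | ht
    · simp only [cyclicNext]
      rw [Nat.mod_eq_of_lt ht]
    · simp only [cyclicNext]
      rw [show (t : ℕ) + 1 = p.length from ht, Nat.mod_self, p.getVert_zero, p.getVert_length]
  obtain ⟨t, ht⟩ := h p.length (fun t => p.getVert t) ⟨hp.three_le_length, fun s t hst => Fin.ext
    (hp.getVert_injOn' (by simp only [Set.mem_ofPred_eq]; omega)
      (by simp only [Set.mem_ofPred_eq]; omega) hst), fun t => by
        simpa using hE (hmem t)⟩
  exact ht (hmem t)

lemma exists_sign_of_isAcyclic {V : Type*} {G : SimpleGraph V} (h : G.IsAcyclic) :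
    ∃ ε : V → ℤ, (∀ v, ε v ≠ 0) ∧ ∀ u v, G.Adj u v → ε u + ε v = 0 := by
  obtain ⟨C⟩ := h.colorable_two
  refine ⟨fun v => if C v = 0 then 1 else -1, fun v => by dsimp only; split_ifs <;> simp,
    fun u v huv => ?_⟩
  have := C.valid huv
  dsimp only
  split_ifs with hu hv hv <;> first | rfl | omega

lemma eq_zero_of_weight {n q : ℕ} {e : Fin q → Finset (Fin n)} {g : Fin q → ℤ}
    (hg : ∀ v, ∑ i, (if v ∈ e i then g i else 0) = 0) (φ : Fin n → ℤ) (i₀ : Fin q)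
    (hφ : ∀ i, i ≠ i₀ → g i ≠ 0 → ∑ v ∈ e i, φ v = 0) (hφ₀ : ∑ v ∈ e i₀, φ v ≠ 0) :
    g i₀ = 0 := by
  have hsum : ∑ i, g i * ∑ v ∈ e i, φ v = 0 := by
    calc ∑ i, g i * ∑ v ∈ e i, φ v
        = ∑ i, ∑ v, φ v * (if v ∈ e i then g i else 0) := by
          refine Finset.sum_congr rfl fun i _ => ?_
          simp [Finset.mul_sum, mul_comm]
      _ = ∑ v, φ v * ∑ i, (if v ∈ e i then g i else 0) := by
          rw [Finset.sum_comm]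
          simp only [Finset.mul_sum]
      _ = 0 := by simp [hg]
  rw [Finset.sum_eq_single i₀ (fun i _ hi => ?_) (by simp)] at hsum
  · exact (mul_eq_zero.1 hsum).resolve_right hφ₀
  · by_cases hgi : g i = 0
    · simp [hgi]
    · simp [hφ i hi hgi]

lemma eq_zero_of_isAcyclic {n q : ℕ} {e : Fin q → Finset (Fin n)}
    (hcard : ∀ i, (e i).card = 2) (hinj : Function.Injective e) {E : Set (Finset (Fin n))}
    (hE : (edgeGraph E).IsAcyclic) {g : Fin q → ℤ}
    (hg : ∀ v, ∑ i, (if v ∈ e i then g i else 0) = 0) (hgE : ∀ i, g i ≠ 0 → e i ∈ E) :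
    g = 0 := by
  classical
  obtain ⟨ε, hε, hadj⟩ := exists_sign_of_isAcyclic hE
  funext i₀
  by_contra hne
  obtain ⟨u, w, huw, he₀⟩ := Finset.card_eq_two.1 (hcard i₀)
  have hadj₀ : (edgeGraph E).Adj u w := ⟨huw, he₀ ▸ hgE i₀ hne⟩
  set H := (edgeGraph E).deleteEdges {s(u, w)}
  have hbridge : ¬ H.Reachable u w :=
    SimpleGraph.isBridge_iff.1 (SimpleGraph.isAcyclic_iff_forall_isBridge.1 hE hadj₀)
  refine hne (eq_zero_of_weight hg (fun v => if H.Reachable u v then ε v else 0) i₀ ?_ ?_)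
  · intro i hi hgi
    obtain ⟨x, y, hxy, hei⟩ := Finset.card_eq_two.1 (hcard i)
    have hadji : (edgeGraph E).Adj x y := ⟨hxy, hei ▸ hgE i hgi⟩
    have hH : H.Adj x y := by
      refine SimpleGraph.deleteEdges_adj.2 ⟨hadji, fun hmem => hi (hinj ?_)⟩
      rw [hei, he₀]
      rcases Sym2.eq_iff.1 (Set.mem_singleton_iff.1 hmem) with ⟨rfl, rfl⟩ | ⟨rfl, rfl⟩
      · rfl
      · exact Finset.pair_comm _ _
    have hiff : H.Reachable u x ↔ H.Reachable u y :=
      ⟨fun h => h.trans hH.reachable, fun h => h.trans hH.symm.reachable⟩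
    rw [hei, Finset.sum_pair hxy]
    by_cases hx : H.Reachable u x
    · rw [if_pos hx, if_pos (hiff.1 hx), hadj x y hadji]
    · rw [if_neg hx, if_neg (mt hiff.2 hx), add_zero]
  · rw [he₀, Finset.sum_pair huw, if_pos (SimpleGraph.Reachable.refl u), if_neg hbridge, add_zero]
    exact hε u

lemma incidenceIndependent_of_odd_cycle {n q : ℕ} {e : Fin q → Finset (Fin n)}
    (hcard : ∀ i, (e i).card = 2) (hinj : Function.Injective e) {m : ℕ} {x : Fin m → Fin n}
    (hx : IsCycleIn e x) (hm : Odd m)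
    (huniq : ∀ (m' : ℕ) (x' : Fin m' → Fin n), IsCycleIn e x' →
      (Finset.univ.image fun t : Fin m' => ({x' t, x' (cyclicNext t)} : Finset (Fin n))) =
        Finset.univ.image fun t : Fin m => ({x t, x (cyclicNext t)} : Finset (Fin n))) :
    IncidenceIndependent e := by
  obtain ⟨hm3, hxinj, hxe⟩ := hx
  let first : Fin m := ⟨0, by omega⟩
  let last : Fin m := ⟨m - 1, by omega⟩
  have hnext : cyclicNext last = first := by
    simp only [cyclicNext, last, first, Fin.mk.injEq]
    rw [Nat.sub_add_cancel (by omega), Nat.mod_self]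
  obtain ⟨i₀, hi₀⟩ := hxe last
  rw [hnext] at hi₀
  have hne : x last ≠ x first := hxinj.ne (by simp [last, first, Fin.ext_iff]; omega)
  let E : Set (Finset (Fin n)) := Set.range e \ {e i₀}
  have hE : (edgeGraph E).IsAcyclic := by
    refine isAcyclic_edgeGraph Set.sdiff_subset fun m' x' hx' => ?_
    have hmem : e i₀ ∈ Finset.univ.image
        fun t : Fin m' => ({x' t, x' (cyclicNext t)} : Finset (Fin n)) := by
      rw [huniq m' x' hx']
      exact Finset.mem_image.2 ⟨last, Finset.mem_univ _, by rw [hnext, hi₀]⟩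
    obtain ⟨t, -, ht⟩ := Finset.mem_image.1 hmem
    exact ⟨t, fun h => h.2 ht⟩
  obtain ⟨ε, hε, hadj⟩ := exists_sign_of_isAcyclic hE
  have hpath : ∀ t (ht : t < m), ε (x ⟨t, ht⟩) = (-1) ^ t * ε (x first) := by
    intro t
    induction t with
    | zero => intro _; simp [first]
    | succ t ih =>
      intro ht
      have hnx : cyclicNext ⟨t, by omega⟩ = (⟨t + 1, ht⟩ : Fin m) := by
        simp [cyclicNext, Nat.mod_eq_of_lt ht]
      have hEmem : ({x ⟨t, by omega⟩, x ⟨t + 1, ht⟩} : Finset (Fin n)) ∈ E := by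
        refine ⟨?_, fun heq => ?_⟩
        · obtain ⟨i, hi⟩ := hxe ⟨t, by omega⟩
          exact ⟨i, by rw [hi, hnx]⟩
        · rw [Set.mem_singleton_iff, hi₀] at heq
          have h1 : x ⟨t, by omega⟩ ∈ ({x last, x first} : Finset (Fin n)) := by
            rw [← heq]; simp
          have h2 : x ⟨t + 1, ht⟩ ∈ ({x last, x first} : Finset (Fin n)) := by
            rw [← heq]; simp
          simp only [Finset.mem_insert, Finset.mem_singleton, hxinj.eq_iff, first, last,
            Fin.mk.injEq] at h1 h2
          omega
      have hsum := hadj _ _ ⟨hxinj.ne (by simp), hEmem⟩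
      rw [ih (by omega)] at hsum
      rw [pow_succ]
      linarith
  intro g hg
  have hedge : ∀ i, i ≠ i₀ → e i ∈ E := fun i hi => ⟨⟨i, rfl⟩, fun h => hi (hinj h)⟩
  have hg₀ : g i₀ = 0 := by
    refine eq_zero_of_weight hg ε i₀ (fun i hi _ => ?_) ?_
    · obtain ⟨u, v, huv, hei⟩ := Finset.card_eq_two.1 (hcard i)
      rw [hei, Finset.sum_pair huv]
      exact hadj u v ⟨huv, hei ▸ hedge i hi⟩
    · have heven : Even (m - 1) := Nat.Odd.sub_odd hm odd_one
      rw [hi₀, Finset.sum_pair hne, hpath (m - 1) (by omega), heven.neg_one_pow, one_mul]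
      have := hε (x first)
      omega
  exact eq_zero_of_isAcyclic hcard hinj hE hg fun i hi => hedge i fun h => hi (h ▸ hg₀)

theorem stmt18 {K : Type*} [Field K] {n q : ℕ} (e : Fin q → Finset (Fin n))
    (hcard : ∀ i, (e i).card = 2) (hinj : Function.Injective e)
    (hG : -- either `G` is a tree (connected and acyclic) ...
      ((∀ u v : Fin n, Relation.ReflTransGen
          (fun u v => u ≠ v ∧ ∃ i, u ∈ e i ∧ v ∈ e i) u v) ∧
        ¬ ∃ (m : ℕ) (x : Fin m → Fin n), IsCycleIn e x) ∨
      -- ... or `G` contains a unique cycle, and that cycle has odd length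
      (∃ (m : ℕ) (x : Fin m → Fin n), IsCycleIn e x ∧ Odd m ∧
        ∀ (m' : ℕ) (x' : Fin m' → Fin n), IsCycleIn e x' →
          (Finset.univ.image fun t : Fin m' =>
              ({x' t, x' (cyclicNext t)} : Finset (Fin n))) =
            (Finset.univ.image fun t : Fin m =>
              ({x t, x (cyclicNext t)} : Finset (Fin n))))) :
    IsLinearType K e := by
  refine isLinearType_of_incidenceIndependent K hcard ?_
  rcases hG with ⟨-, hacyc⟩ | ⟨m, x, hx, hm, huniq⟩
  · have hE : (edgeGraph (Set.range e)).IsAcyclic :=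
      isAcyclic_edgeGraph subset_rfl fun m x hx => (hacyc ⟨m, x, hx⟩).elim
    exact fun g hg => eq_zero_of_isAcyclic hcard hinj hE hg fun i _ => ⟨i, rfl⟩
  · exact incidenceIndependent_of_odd_cycle hcard hinj hx hm huniq
end
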